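/- arXiv:hep-th/9203073 — 3 statements merged into one kernel-verified Lean document; each statement's English description precedes it below -/
import Mathlib

section
/- For all real ν, γ and all θ₁, θ₂, θ₃ ∈ ℂ, the operator family Ŝ(θ) satisfies the Yang–Baxter equation on ℂ²⊗ℂ²⊗ℂ²: Ŝ₁₂(θ₁−θ₂)·Ŝ₁₃(θ₁−θ₃)·Ŝ₂₃(θ₂−θ₃) = Ŝ₂₃(θ₂−θ₃)·Ŝ₁₃(θ₁−θ₃)·Ŝ₁₂(θ₁−θ₂), where the subscripts indicate the pair of tensor factors on which the operator acts (identity on the remaining factor). -/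
/-- The unnormalized modified sine-Gordon S-matrix `Ŝ(θ)` on `ℂ²⊗ℂ²`
(eq. (2.1) of the paper with `Z ≡ 1`); index `0 = e₊`, `1 = e₋`. -/
noncomputable def Shat (ν γ : ℝ) (θ : ℂ) :
    Matrix (Fin 2 × Fin 2) (Fin 2 × Fin 2) ℂ :=
  Matrix.of fun p q =>
    (if p = q then
      (if p.1 = p.2 then Complex.sinh ((ν : ℂ) * θ + Complex.I * (γ : ℂ))
       else Complex.sinh ((ν : ℂ) * θ))
     else 0)
    + (if p = ((1 : Fin 2), (0 : Fin 2)) ∧ q = ((0 : Fin 2), (1 : Fin 2)) then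
        Complex.I * Complex.sin (γ : ℂ) * Complex.exp ((ν : ℂ) * θ) else 0)
    + (if p = ((0 : Fin 2), (1 : Fin 2)) ∧ q = ((1 : Fin 2), (0 : Fin 2)) then
        Complex.I * Complex.sin (γ : ℂ) * Complex.exp (-((ν : ℂ) * θ)) else 0)

/-- Lift of an operator on factors 1,2 to the triple tensor product. -/
noncomputable def on12 {A B C : Type*} [DecidableEq C]
    (S : Matrix (A × B) (A × B) ℂ) : Matrix (A × B × C) (A × B × C) ℂ :=
  Matrix.of fun x y => S (x.1, x.2.1) (y.1, y.2.1) * (if x.2.2 = y.2.2 then 1 else 0)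

/-- Lift of an operator on factors 1,3 to the triple tensor product. -/
noncomputable def on13 {A B C : Type*} [DecidableEq B]
    (S : Matrix (A × C) (A × C) ℂ) : Matrix (A × B × C) (A × B × C) ℂ :=
  Matrix.of fun x y => S (x.1, x.2.2) (y.1, y.2.2) * (if x.2.1 = y.2.1 then 1 else 0)

/-- Lift of an operator on factors 2,3 to the triple tensor product. -/
noncomputable def on23 {A B C : Type*} [DecidableEq A]
    (S : Matrix (B × C) (B × C) ℂ) : Matrix (A × B × C) (A × B × C) ℂ :=
  Matrix.of fun x y => S x.2 y.2 * (if x.1 = y.1 then 1 else 0)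

/-- The entries of `Shat` at a difference of rapidities, in exponential coordinates
`x = exp (ν a)`, `y = exp (ν b)`, `q = exp (i γ)`. -/
theorem Shat_sub_apply (ν γ : ℝ) (a b : ℂ) (p r : Fin 2 × Fin 2) :
    let x := Complex.exp (ν * a)
    let y := Complex.exp (ν * b)
    let q := Complex.exp (Complex.I * γ)
    Shat ν γ (a - b) p r =
      (if p = r then
        (if p.1 = p.2 then (x * y⁻¹ * q - x⁻¹ * y * q⁻¹) / 2 else (x * y⁻¹ - x⁻¹ * y) / 2)
       else 0)
      + (if p = (1, 0) ∧ r = (0, 1) then (q - q⁻¹) / 2 * (x * y⁻¹) else 0)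
      + (if p = (0, 1) ∧ r = (1, 0) then (q - q⁻¹) / 2 * (x⁻¹ * y) else 0) := by
  intro x y q
  have hsin : Complex.I * Complex.sin (γ : ℂ) = (q - q⁻¹) / 2 := by
    rw [mul_comm, ← Complex.sinh_mul_I, mul_comm (γ : ℂ), Complex.sinh, Complex.exp_neg]
  have hexp : Complex.exp (ν * (a - b)) = x * y⁻¹ := by
    rw [mul_sub, sub_eq_add_neg, Complex.exp_add, Complex.exp_neg]
  have hexp_neg : Complex.exp (-(ν * (a - b))) = x⁻¹ * y := by
    rw [Complex.exp_neg, hexp, mul_inv, inv_inv]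
  have hsinh : Complex.sinh (ν * (a - b)) = (x * y⁻¹ - x⁻¹ * y) / 2 := by
    rw [Complex.sinh, hexp, hexp_neg]
  have hsinh_add : Complex.sinh (ν * (a - b) + Complex.I * γ) =
      (x * y⁻¹ * q - x⁻¹ * y * q⁻¹) / 2 := by
    rw [Complex.sinh, neg_add, Complex.exp_add, Complex.exp_add, hexp, hexp_neg,
      Complex.exp_neg (Complex.I * γ)]
  simp only [Shat, Matrix.of_apply, hsin, hexp, hexp_neg, hsinh, hsinh_add]

set_option maxHeartbeats 4000000 in
/-- The modified sine-Gordon S-matrix satisfies the Yang–Baxter equation on `ℂ²⊗ℂ²⊗ℂ²`. -/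
theorem Shat_yang_baxter (ν γ : ℝ) (θ₁ θ₂ θ₃ : ℂ) :
    on12 (C := Fin 2) (Shat ν γ (θ₁ - θ₂)) * on13 (B := Fin 2) (Shat ν γ (θ₁ - θ₃)) *
        on23 (A := Fin 2) (Shat ν γ (θ₂ - θ₃))
      = on23 (A := Fin 2) (Shat ν γ (θ₂ - θ₃)) * on13 (B := Fin 2) (Shat ν γ (θ₁ - θ₃)) *
          on12 (C := Fin 2) (Shat ν γ (θ₁ - θ₂)) := by
  have h₁ := Complex.exp_ne_zero (ν * θ₁)
  have h₂ := Complex.exp_ne_zero (ν * θ₂)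
  have h₃ := Complex.exp_ne_zero (ν * θ₃)
  have hq := Complex.exp_ne_zero (Complex.I * γ)
  ext ⟨i, j, k⟩ ⟨l, m, n⟩
  simp only [Matrix.mul_apply, Fintype.sum_prod_type, Fin.sum_univ_two, on12, on13, on23,
    Matrix.of_apply, Shat_sub_apply]
  generalize Complex.exp (ν * θ₁) = x at *
  generalize Complex.exp (ν * θ₂) = y at *
  generalize Complex.exp (ν * θ₃) = z at *
  generalize Complex.exp (Complex.I * γ) = q at *
  fin_cases i <;> fin_cases j <;> fin_cases k <;> fin_cases l <;> fin_cases m <;> fin_cases n <;>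
    simp [-mul_eq_mul_left_iff, -mul_eq_mul_right_iff] <;> field_simp <;> ring
end

section
/- For every N ∈ ℕ with J := N/2, and all real ν, γ with sin γ ≠ 0, the Kulish–Reshetikhin S-matrix Ŝ^{(J,½)}(θ) together with the fundamental S-matrix Ŝ(θ) satisfies the mixed Yang–Baxter equation on ℂ^{N+1}⊗ℂ²⊗ℂ²: for all θ₁, θ₂, θ₃ ∈ ℂ, Ŝ^{(J,½)}₁₂(θ₁−θ₂)·Ŝ^{(J,½)}₁₃(θ₁−θ₃)·Ŝ₂₃(θ₂−θ₃) = Ŝ₂₃(θ₂−θ₃)·Ŝ^{(J,½)}₁₃(θ₁−θ₃)·Ŝ^{(J,½)}₁₂(θ₁−θ₂), where the subscripts indicate the pair of tensor factors on which the operator acts (identity on the remaining factor). -/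
open Kronecker

/-- The q-number `[t]_q = sin(γt)/sin γ`. -/
noncomputable def qnum (γ : ℝ) (t : ℂ) : ℂ := Complex.sin ((γ : ℂ) * t) / Complex.sin (γ : ℂ)

/-- The spin-`J` raising matrix (`J = N/2`, index `k` ↦ weight `M = J − k`):
`E e_M = d_M e_{M+1}`. -/
noncomputable def spinE (N : ℕ) (d : Fin (N + 1) → ℂ) :
    Matrix (Fin (N + 1)) (Fin (N + 1)) ℂ :=
  Matrix.of fun j k => if (j : ℕ) + 1 = (k : ℕ) then d k else 0

/-- The spin-`J` lowering matrix: `F e_M = d_{M−1} e_{M−1}`. -/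
noncomputable def spinF (N : ℕ) (d : Fin (N + 1) → ℂ) :
    Matrix (Fin (N + 1)) (Fin (N + 1)) ℂ :=
  Matrix.of fun j k => if (j : ℕ) = (k : ℕ) + 1 then d j else 0

/-- `d_M² = [J+M+1]_q·[J−M]_q`, i.e. for `M = J − k`, `d_k² = [N+1−k]_q·[k]_q`. -/
def spinCond (N : ℕ) (γ : ℝ) (d : Fin (N + 1) → ℂ) : Prop :=
  ∀ k : Fin (N + 1), d k ^ 2 = qnum γ ((N : ℂ) + 1 - ((k : ℕ) : ℂ)) * qnum γ ((k : ℕ) : ℂ)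

/-- The raising Pauli matrix `σ⁺` (`σ⁺e₋ = e₊`, `σ⁺e₊ = 0`); index `0 = e₊`, `1 = e₋`. -/
noncomputable def σp : Matrix (Fin 2) (Fin 2) ℂ :=
  Matrix.of fun i j => if i = 0 ∧ j = 1 then 1 else 0

/-- The lowering Pauli matrix `σ⁻ = (σ⁺)ᵀ`. -/
noncomputable def σm : Matrix (Fin 2) (Fin 2) ℂ := σp.transpose

/-- The Kulish–Reshetikhin S-matrix `Ŝ^{(J,½)}(θ) = sinh(D(θ)) + i sin γ (e^{νθ}F⊗σ⁺
+ e^{−νθ}E⊗σ⁻)` on `ℂ^{N+1}⊗ℂ²`, where `D(θ) = νθ·I + i(γ/2)(I + H⊗σ³)` is diagonal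
and `sinh` is applied entrywise to its diagonal. -/
noncomputable def SJhat (N : ℕ) (ν γ : ℝ) (d : Fin (N + 1) → ℂ) (θ : ℂ) :
    Matrix (Fin (N + 1) × Fin 2) (Fin (N + 1) × Fin 2) ℂ :=
  (Matrix.of fun p q =>
    if p = q then
      Complex.sinh ((ν : ℂ) * θ + Complex.I * ((γ : ℂ) / 2) *
        (1 + ((N : ℂ) - 2 * ((p.1 : ℕ) : ℂ)) * (if p.2 = 0 then 1 else -1)))
    else (0 : ℂ))
  + (Complex.I * Complex.sin (γ : ℂ) * Complex.exp ((ν : ℂ) * θ)) • (spinF N d ⊗ₖ σp)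
  + (Complex.I * Complex.sin (γ : ℂ) * Complex.exp (-((ν : ℂ) * θ))) • (spinE N d ⊗ₖ σm)

/-- The operator on the first tensor factor obtained by fixing the matrix indices of the second. -/
def auxBlock {A B : Type*} (S : Matrix (A × B) (A × B) ℂ) (b b' : B) : Matrix A A ℂ :=
  Matrix.of fun j k => S (j, b) (k, b')

section Blocks

variable {A B C : Type*} [Fintype A] [Fintype B] [Fintype C]

theorem on12_mul_on13_apply [DecidableEq B] [DecidableEq C]
    (S : Matrix (A × B) (A × B) ℂ) (T : Matrix (A × C) (A × C) ℂ)
    (x y : A × B × C) :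
    (on12 (C := C) S * on13 (B := B) T) x y
      = (auxBlock S x.2.1 y.2.1 * auxBlock T x.2.2 y.2.2) x.1 y.1 := by
  simp [Matrix.mul_apply, Fintype.sum_prod_type, on12, on13, auxBlock]

theorem on13_mul_on12_apply [DecidableEq B] [DecidableEq C]
    (S : Matrix (A × B) (A × B) ℂ) (T : Matrix (A × C) (A × C) ℂ)
    (x y : A × B × C) :
    (on13 (B := B) T * on12 (C := C) S) x y
      = (auxBlock T x.2.2 y.2.2 * auxBlock S x.2.1 y.2.1) x.1 y.1 := by
  simp [Matrix.mul_apply, Fintype.sum_prod_type, on12, on13, auxBlock]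

theorem mul_on23_apply [DecidableEq A]
    (M : Matrix (A × B × C) (A × B × C) ℂ) (R : Matrix (B × C) (B × C) ℂ)
    (x y : A × B × C) :
    (M * on23 (A := A) R) x y = ∑ b, ∑ c, M x (y.1, b, c) * R (b, c) y.2 := by
  rw [Matrix.mul_apply, Fintype.sum_prod_type, Finset.sum_eq_single y.1]
  · simp [Fintype.sum_prod_type, on23]
  · intro a _ h
    simp [on23, h]
  · simp

theorem on23_mul_apply [DecidableEq A]
    (M : Matrix (A × B × C) (A × B × C) ℂ) (R : Matrix (B × C) (B × C) ℂ)
    (x y : A × B × C) :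
    (on23 (A := A) R * M) x y = ∑ b, ∑ c, R x.2 (b, c) * M (x.1, b, c) y := by
  rw [Matrix.mul_apply, Fintype.sum_prod_type, Finset.sum_eq_single x.1]
  · simp [Fintype.sum_prod_type, on23]
  · intro a _ h
    simp [on23, Ne.symm h]
  · simp

end Blocks

theorem complex_sinh_eq_of_exp {z X : ℂ} (h : Complex.exp z = X) :
    Complex.sinh z = (X - X⁻¹) / 2 := by
  rw [Complex.sinh, Complex.exp_neg, h]

/-- The weight `q^{H/2}` of the basis vector with index `n`, where `q = e^{iγ}`. -/
noncomputable def spinWeight (N : ℕ) (γ : ℝ) (n : ℕ) : ℂ :=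
  Complex.exp (Complex.I * ((γ : ℂ) / 2) * ((N : ℂ) - 2 * (n : ℂ)))

/-- The square root `e^{iγ/2}` of the deformation parameter. -/
noncomputable def sqrtQ (γ : ℝ) : ℂ := Complex.exp (Complex.I * ((γ : ℂ) / 2))

theorem spinWeight_ne_zero (N : ℕ) (γ : ℝ) (n : ℕ) : spinWeight N γ n ≠ 0 :=
  Complex.exp_ne_zero _

theorem sqrtQ_ne_zero (γ : ℝ) : sqrtQ γ ≠ 0 := Complex.exp_ne_zero _

theorem spinWeight_eq_succ (N : ℕ) (γ : ℝ) (n : ℕ) :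
    spinWeight N γ n = spinWeight N γ (n + 1) * sqrtQ γ ^ 2 := by
  rw [spinWeight, spinWeight, sqrtQ, ← Complex.exp_nat_mul, ← Complex.exp_add]
  congr 1
  push_cast
  ring

theorem I_mul_sin_eq (γ : ℝ) :
    Complex.I * Complex.sin (γ : ℂ) = (sqrtQ γ ^ 2 - (sqrtQ γ ^ 2)⁻¹) / 2 := by
  rw [mul_comm, ← Complex.sinh_mul_I]
  apply complex_sinh_eq_of_exp
  rw [sqrtQ, ← Complex.exp_nat_mul]
  congr 1
  push_cast
  ring

/-- The scalar form of the relation `[E, F] = [H]_q`. -/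
theorem I_mul_sin_mul_qnum_sub (N : ℕ) (γ : ℝ) (hγ : Complex.sin (γ : ℂ) ≠ 0) (n : ℕ) :
    Complex.I * Complex.sin (γ : ℂ) *
        (qnum γ ((N : ℂ) - (n : ℂ)) * qnum γ ((n : ℂ) + 1)
          - qnum γ ((N : ℂ) + 1 - (n : ℂ)) * qnum γ (n : ℂ))
      = (spinWeight N γ n ^ 2 - (spinWeight N γ n ^ 2)⁻¹) / 2 := by
  set s := Complex.I * Complex.sin (γ : ℂ) with hs
  set q := Complex.exp (Complex.I * (γ : ℂ)) with hq
  set a := Complex.exp (Complex.I * (γ : ℂ) * ((N : ℂ) - n)) with ha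
  set b := Complex.exp (Complex.I * (γ : ℂ) * n) with hb
  have hq₀ : q ≠ 0 := Complex.exp_ne_zero _
  have ha₀ : a ≠ 0 := Complex.exp_ne_zero _
  have hb₀ : b ≠ 0 := Complex.exp_ne_zero _
  have hs₀ : s ≠ 0 := mul_ne_zero Complex.I_ne_zero hγ
  have hsq : s = (q - q⁻¹) / 2 := by
    rw [hs, mul_comm, ← Complex.sinh_mul_I]
    exact complex_sinh_eq_of_exp (by rw [mul_comm])
  have hqnum : ∀ t z : ℂ, Complex.exp (Complex.I * (γ : ℂ) * t) = z →
      s * qnum γ t = (z - z⁻¹) / 2 := by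
    intro t z h
    rw [← complex_sinh_eq_of_exp h, hs, qnum, mul_assoc, mul_div_cancel₀ _ hγ, mul_comm,
      ← Complex.sinh_mul_I]
    congr 1
    ring
  have h₁ := hqnum (N - n) a rfl
  have h₂ := hqnum n b rfl
  have h₃ := hqnum (n + 1) (b * q) (by rw [mul_add, Complex.exp_add, mul_one])
  have h₄ := hqnum (N + 1 - n) (a * q) (by
    rw [ha, hq, ← Complex.exp_add]
    congr 1
    ring)
  have hw : spinWeight N γ n ^ 2 = a * b⁻¹ := by
    rw [ha, hb, spinWeight, ← Complex.exp_nat_mul, ← Complex.exp_neg, ← Complex.exp_add]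
    congr 1
    push_cast
    ring
  apply mul_left_cancel₀ hs₀
  calc s * (s * (qnum γ ((N : ℂ) - n) * qnum γ ((n : ℂ) + 1)
          - qnum γ ((N : ℂ) + 1 - n) * qnum γ n))
      = s * qnum γ ((N : ℂ) - n) * (s * qnum γ ((n : ℂ) + 1))
          - s * qnum γ ((N : ℂ) + 1 - n) * (s * qnum γ n) := by ring
    _ = s * ((spinWeight N γ n ^ 2 - (spinWeight N γ n ^ 2)⁻¹) / 2) := by
      rw [h₁, h₂, h₃, h₄, hw, hsq]
      field_simp
      ring

section SpinMatrices

variable {N : ℕ} {d : Fin (N + 1) → ℂ}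

theorem spinF_mul_spinE (γ : ℝ) (hd : spinCond N γ d) :
    spinF N d * spinE N d = Matrix.diagonal fun j : Fin (N + 1) =>
      qnum γ ((N : ℂ) + 1 - ((j : ℕ) : ℂ)) * qnum γ ((j : ℕ) : ℂ) := by
  ext j k
  rw [Matrix.mul_apply, Matrix.diagonal_apply]
  induction j using Fin.cases with
  | zero => simp [spinF, qnum]
  | succ i =>
    rw [Finset.sum_eq_single i.castSucc]
    · rw [← hd]
      by_cases h : i.succ = k
      · subst h
        simp [spinF, spinE, sq]
      · have : ¬ (i : ℕ) + 1 = k := fun h' => h (Fin.ext (by simpa using h'))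
        simp [spinE, h, this]
    · intro b _ hb
      have : ¬ (i : ℕ) = b := fun h' => hb (Fin.ext (by simpa using h'.symm))
      simp [spinF, this]
    · simp

theorem spinE_mul_spinF (γ : ℝ) (hd : spinCond N γ d) :
    spinE N d * spinF N d = Matrix.diagonal fun j : Fin (N + 1) =>
      qnum γ ((N : ℂ) - ((j : ℕ) : ℂ)) * qnum γ (((j : ℕ) : ℂ) + 1) := by
  ext j k
  rw [Matrix.mul_apply, Matrix.diagonal_apply]
  induction j using Fin.lastCases with
  | last =>
    rw [Finset.sum_eq_zero]
    · simp [qnum]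
    · intro b _
      have : ¬ N + 1 = (b : ℕ) := by omega
      simp [spinE, this]
  | cast i =>
    rw [Finset.sum_eq_single i.succ]
    · have := hd i.succ
      simp only [Fin.val_succ, Nat.cast_add, Nat.cast_one, add_sub_add_right_eq_sub] at this
      rw [Fin.val_castSucc, ← this]
      by_cases h : i.castSucc = k
      · subst h
        simp [spinF, spinE, sq]
      · have : ¬ (i : ℕ) = k := fun h' => h (Fin.ext (by simpa using h'))
        simp [spinF, h, this]
    · intro b _ hb
      have : ¬ (i : ℕ) + 1 = b := fun h' => hb (Fin.ext (by simpa using h'.symm))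
      simp [spinE, this]
    · simp

theorem spinE_apply_eq_zero_or (j k : Fin (N + 1)) :
    spinE N d j k = 0 ∨ (k : ℕ) = (j : ℕ) + 1 := by
  by_cases h : (j : ℕ) + 1 = k
  · exact Or.inr h.symm
  · exact Or.inl (by simp [spinE, h])

theorem spinF_apply_eq_zero_or (j k : Fin (N + 1)) :
    spinF N d j k = 0 ∨ (j : ℕ) = (k : ℕ) + 1 := by
  by_cases h : (j : ℕ) = k + 1
  · exact Or.inr h
  · exact Or.inl (by simp [spinF, h])

end SpinMatrices

section SJhatBlocks

variable (N : ℕ) (ν γ : ℝ) (d : Fin (N + 1) → ℂ) (θ : ℂ)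

theorem auxBlock_SJhat_zero_zero :
    auxBlock (SJhat N ν γ d θ) 0 0 = Matrix.diagonal fun j : Fin (N + 1) =>
      (Complex.exp (ν * θ) * sqrtQ γ * spinWeight N γ j
        - (Complex.exp (ν * θ) * sqrtQ γ * spinWeight N γ j)⁻¹) / 2 := by
  ext j k
  rw [Matrix.diagonal_apply, ← complex_sinh_eq_of_exp
    (z := (ν : ℂ) * θ + Complex.I * ((γ : ℂ) / 2) * (1 + ((N : ℂ) - 2 * ((j : ℕ) : ℂ))))]
  · simp [auxBlock, SJhat, σp, σm]
  · rw [sqrtQ, spinWeight, ← Complex.exp_add, ← Complex.exp_add]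
    congr 1
    ring

theorem auxBlock_SJhat_one_one :
    auxBlock (SJhat N ν γ d θ) 1 1 = Matrix.diagonal fun j : Fin (N + 1) =>
      (Complex.exp (ν * θ) * sqrtQ γ * (spinWeight N γ j)⁻¹
        - (Complex.exp (ν * θ) * sqrtQ γ * (spinWeight N γ j)⁻¹)⁻¹) / 2 := by
  ext j k
  rw [Matrix.diagonal_apply, ← complex_sinh_eq_of_exp
    (z := (ν : ℂ) * θ + Complex.I * ((γ : ℂ) / 2) * (1 + ((N : ℂ) - 2 * ((j : ℕ) : ℂ)) * -1))]
  · simp [auxBlock, SJhat, σp, σm]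
  · rw [sqrtQ, spinWeight, ← Complex.exp_neg, ← Complex.exp_add, ← Complex.exp_add]
    congr 1
    ring

theorem auxBlock_SJhat_zero_one :
    auxBlock (SJhat N ν γ d θ) 0 1
      = (Complex.I * Complex.sin (γ : ℂ) * Complex.exp (ν * θ)) • spinF N d := by
  ext j k
  simp [auxBlock, SJhat, σp, σm]

theorem auxBlock_SJhat_one_zero :
    auxBlock (SJhat N ν γ d θ) 1 0
      = (Complex.I * Complex.sin (γ : ℂ) * (Complex.exp (ν * θ))⁻¹) • spinE N d := by
  ext j k
  simp [auxBlock, SJhat, σp, σm, Complex.exp_neg]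

end SJhatBlocks

set_option maxHeartbeats 800000 in
/-- The mixed Yang–Baxter equation on `ℂ^{N+1}⊗ℂ²⊗ℂ²` for the Kulish–Reshetikhin
S-matrix `Ŝ^{(J,½)}` and the fundamental S-matrix `Ŝ`. -/
theorem SJhat_mixed_yang_baxter (N : ℕ) (ν γ : ℝ) (hγ : Complex.sin (γ : ℂ) ≠ 0)
    (d : Fin (N + 1) → ℂ) (hd : spinCond N γ d) (θ₁ θ₂ θ₃ : ℂ) :
    on12 (C := Fin 2) (SJhat N ν γ d (θ₁ - θ₂)) *
        on13 (B := Fin 2) (SJhat N ν γ d (θ₁ - θ₃)) *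
        on23 (A := Fin (N + 1)) (Shat ν γ (θ₂ - θ₃))
      = on23 (A := Fin (N + 1)) (Shat ν γ (θ₂ - θ₃)) *
          on13 (B := Fin 2) (SJhat N ν γ d (θ₁ - θ₃)) *
          on12 (C := Fin 2) (SJhat N ν γ d (θ₁ - θ₂)) := by
  have hX₁₃ : Complex.exp (ν * (θ₁ - θ₃))
      = Complex.exp (ν * (θ₁ - θ₂)) * Complex.exp (ν * (θ₂ - θ₃)) := by
    rw [← Complex.exp_add]
    congr 1
    ring
  have hR₀ : Complex.sinh ((ν : ℂ) * (θ₂ - θ₃))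
      = (Complex.exp (ν * (θ₂ - θ₃)) - (Complex.exp (ν * (θ₂ - θ₃)))⁻¹) / 2 :=
    complex_sinh_eq_of_exp rfl
  have hR₁ : Complex.sinh ((ν : ℂ) * (θ₂ - θ₃) + Complex.I * (γ : ℂ))
      = (Complex.exp (ν * (θ₂ - θ₃)) * sqrtQ γ ^ 2
        - (Complex.exp (ν * (θ₂ - θ₃)) * sqrtQ γ ^ 2)⁻¹) / 2 := by
    apply complex_sinh_eq_of_exp
    rw [Complex.exp_add, sqrtQ, ← Complex.exp_nat_mul]
    congr 2
    push_cast
    ring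
  have hqs := I_mul_sin_eq γ
  have hw := sqrtQ_ne_zero γ
  ext ⟨j, b, c⟩ ⟨k, b', c'⟩
  have hcomm := I_mul_sin_mul_qnum_sub N γ hγ j
  have hjs := spinWeight_eq_succ N γ j
  have hks := spinWeight_eq_succ N γ k
  have hj := spinWeight_ne_zero N γ j
  have hj' := spinWeight_ne_zero N γ (j + 1)
  have hk' := spinWeight_ne_zero N γ (k + 1)
  have hX := Complex.exp_ne_zero (ν * (θ₁ - θ₂))
  have hY := Complex.exp_ne_zero (ν * (θ₂ - θ₃))
  rw [mul_on23_apply, Matrix.mul_assoc, on23_mul_apply]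
  simp only [on12_mul_on13_apply, on13_mul_on12_apply, Fin.sum_univ_two]
  fin_cases b <;> fin_cases c <;> fin_cases b' <;> fin_cases c' <;>
    simp [Shat, auxBlock_SJhat_zero_zero, auxBlock_SJhat_zero_one, auxBlock_SJhat_one_zero,
      auxBlock_SJhat_one_one, spinE_mul_spinF γ hd, spinF_mul_spinE γ hd, hX₁₃, hR₀, hR₁,
      Complex.exp_neg, -mul_eq_mul_left_iff, -mul_eq_mul_right_iff]
  all_goals
    generalize Complex.exp (ν * (θ₁ - θ₂)) = X at *
    generalize Complex.exp (ν * (θ₂ - θ₃)) = Y at *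
  all_goals try ring1
  all_goals try
    rcases spinF_apply_eq_zero_or (d := d) j k with h | h
    · simp [h]
    · rw [h, hks, hqs]
      field_simp
      ring1
  all_goals try
    rcases spinE_apply_eq_zero_or (d := d) j k with h | h
    · simp [h]
    · rw [h, hjs, hqs]
      field_simp
      ring1
  all_goals
    by_cases h : j = k
    swap
    · simp [Matrix.diagonal_apply_ne _ h]
    subst h
    simp only [Matrix.diagonal_apply_eq]
  all_goals try ring1
  all_goals generalize Complex.I * Complex.sin (γ : ℂ) = s at *
  · linear_combination (norm := (field_simp; ring1)) (-s * Y⁻¹ * (Y - Y⁻¹) / 2) * hcomm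
  · linear_combination (norm := (field_simp; ring1)) (s * Y * (Y - Y⁻¹) / 2) * hcomm
end

section
/- Let ν, γ ∈ ℝ with ν ≠ 0, sin γ ≠ 0 and sin 2γ ≠ 0, and let θ₀ := iγ/ν be the fusion point. Then the operator Ŝ(θ₀) on ℂ²⊗ℂ² is degenerate: its kernel is exactly the line spanned by the q-singlet s := e^{−iγ/2}·e₊⊗e₋ − e^{iγ/2}·e₋⊗e₊, and its image is exactly the 3-dimensional q-triplet subspace spanned by e₊⊗e₊, e₋⊗e₋ and e^{−iγ/2}·e₊⊗e₋ + e^{iγ/2}·e₋⊗e₊. (At the bound-state pole θ = iγ/ν the tensor product of two doublets degenerates onto the isospin-1 component, the mechanism behind the fusion procedure of Section 4.) -/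
/-- The basis vector `e_i ⊗ e_j` of `ℂ²⊗ℂ²`. -/
noncomputable def bvec (i j : Fin 2) : Fin 2 × Fin 2 → ℂ :=
  fun p => if p = (i, j) then 1 else 0

theorem exp_neg_div_two_mul_exp_div_two (z : ℂ) :
    Complex.exp (-z / 2) * Complex.exp (z / 2) = 1 := by
  rw [← Complex.exp_add, neg_div, neg_add_cancel, Complex.exp_zero]

/-- At the fusion point, `Ŝ` acts by a scalar on `e₊⊗e₊` and `e₋⊗e₋`, and by a rank-one map
onto the line of the q-triplet vector on the span of `e₊⊗e₋` and `e₋⊗e₊`. -/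
theorem Shat_mulVec_fusion_point (ν γ : ℝ) (hν : ν ≠ 0) (x : Fin 2 × Fin 2 → ℂ) :
    (Shat ν γ (Complex.I * γ / ν)).mulVec x =
      (Complex.I * Complex.sin (2 * γ) * x (0, 0)) • bvec 0 0
        + (Complex.I * Complex.sin (2 * γ) * x (1, 1)) • bvec 1 1
        + (Complex.I * Complex.sin γ * (Complex.exp (Complex.I * γ / 2) * x (0, 1)
            + Complex.exp (-(Complex.I * γ) / 2) * x (1, 0))) •
          (Complex.exp (-(Complex.I * γ) / 2) • bvec 0 1
            + Complex.exp (Complex.I * γ / 2) • bvec 1 0) := by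
  have hν' : (ν : ℂ) ≠ 0 := Complex.ofReal_ne_zero.mpr hν
  have hθ : (ν : ℂ) * (Complex.I * γ / ν) = Complex.I * γ := by field_simp
  have hsinh : ∀ z : ℂ, Complex.sinh (Complex.I * z) = Complex.I * Complex.sin z := fun z => by
    rw [mul_comm, Complex.sinh_mul_I, mul_comm]
  have hdouble : Complex.I * (γ : ℂ) + Complex.I * γ = Complex.I * (2 * γ) := by ring
  have hexp : Complex.exp (Complex.I * γ) = Complex.exp (Complex.I * γ / 2) ^ 2 := by
    rw [← Complex.exp_nat_mul]; congr 1; push_cast; ring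
  have hexp_neg : Complex.exp (-(Complex.I * γ)) = Complex.exp (-(Complex.I * γ) / 2) ^ 2 := by
    rw [← Complex.exp_nat_mul]; congr 1; push_cast; ring
  have hinv := exp_neg_div_two_mul_exp_div_two (Complex.I * γ)
  ext ⟨i, j⟩
  fin_cases i <;> fin_cases j <;>
    simp [Matrix.mulVec, dotProduct, Fintype.sum_prod_type, Shat, bvec, hθ, hsinh, hdouble]
  · rw [hexp_neg]
    linear_combination (-Complex.I * Complex.sin γ * x (0, 1)) * hinv
  · rw [hexp]
    linear_combination (-Complex.I * Complex.sin γ * x (1, 0)) * hinv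

/-- At the fusion point `θ₀ = iγ/ν` the S-matrix `Ŝ(θ₀)` degenerates: its kernel is the
line spanned by the q-singlet `s = e^{−iγ/2}e₊⊗e₋ − e^{iγ/2}e₋⊗e₊`, and its image is the
3-dimensional q-triplet subspace spanned by `e₊⊗e₊`, `e₋⊗e₋` and
`e^{−iγ/2}e₊⊗e₋ + e^{iγ/2}e₋⊗e₊`. -/
theorem Shat_degenerates_at_fusion_point (ν γ : ℝ) (hν : ν ≠ 0)
    (hγ : Complex.sin (γ : ℂ) ≠ 0) (h2γ : Complex.sin (2 * (γ : ℂ)) ≠ 0) :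
    let θ₀ : ℂ := Complex.I * (γ : ℂ) / (ν : ℂ)
    let s : Fin 2 × Fin 2 → ℂ :=
      Complex.exp (-(Complex.I * (γ : ℂ)) / 2) • bvec 0 1
        - Complex.exp (Complex.I * (γ : ℂ) / 2) • bvec 1 0
    let t : Fin 2 × Fin 2 → ℂ :=
      Complex.exp (-(Complex.I * (γ : ℂ)) / 2) • bvec 0 1
        + Complex.exp (Complex.I * (γ : ℂ) / 2) • bvec 1 0
    LinearMap.ker (Matrix.mulVecLin (Shat ν γ θ₀)) = Submodule.span ℂ {s} ∧
    LinearMap.range (Matrix.mulVecLin (Shat ν γ θ₀))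
      = Submodule.span ℂ {bvec 0 0, bvec 1 1, t} := by
  intro θ₀ s t
  have hmul : ∀ x, (Shat ν γ θ₀).mulVec x = _ := Shat_mulVec_fusion_point ν γ hν
  have hinv := exp_neg_div_two_mul_exp_div_two (Complex.I * γ)
  constructor
  · ext x
    rw [LinearMap.mem_ker, Matrix.mulVecLin_apply, hmul, Submodule.mem_span_singleton]
    constructor
    · intro h
      have h00 : x (0, 0) = 0 := by simpa [bvec, h2γ] using congrFun h (0, 0)
      have h11 : x (1, 1) = 0 := by simpa [bvec, h2γ] using congrFun h (1, 1)
      have h01 : Complex.exp (Complex.I * γ / 2) * x (0, 1)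
          + Complex.exp (-(Complex.I * γ) / 2) * x (1, 0) = 0 := by
        simpa [bvec, hγ] using congrFun h (0, 1)
      refine ⟨Complex.exp (Complex.I * γ / 2) * x (0, 1), ?_⟩
      ext ⟨i, j⟩
      fin_cases i <;> fin_cases j <;> simp [s, bvec, h00, h11]
      · linear_combination x (0, 1) * hinv
      · linear_combination -Complex.exp (Complex.I * γ / 2) * h01 + x (1, 0) * hinv
    · rintro ⟨a, rfl⟩
      ext ⟨i, j⟩
      fin_cases i <;> fin_cases j <;> simp [s, bvec] <;> ring_nf <;> simp
  · apply le_antisymm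
    · rintro _ ⟨x, rfl⟩
      rw [Matrix.mulVecLin_apply, hmul, Submodule.mem_span_triple]
      exact ⟨_, _, _, rfl⟩
    · intro y hy
      obtain ⟨a, b, c, rfl⟩ := Submodule.mem_span_triple.mp hy
      refine ⟨(a / (Complex.I * Complex.sin (2 * γ))) • bvec 0 0
        + (b / (Complex.I * Complex.sin (2 * γ))) • bvec 1 1
        + (c * Complex.exp (-(Complex.I * γ) / 2) / (Complex.I * Complex.sin γ)) • bvec 0 1, ?_⟩
      rw [Matrix.mulVecLin_apply, hmul]
      have hI := Complex.I_ne_zero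
      congr 2
      · congr 1
        simp [bvec]
        field_simp
      · congr 1
        simp [bvec]
        field_simp
      · simp [bvec]
        field_simp
        rw [← neg_div]
        linear_combination c * hinv
end
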